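/- arXiv:0804.1945 — 2 statements merged into one kernel-verified Lean document; each statement's English description precedes it below -/
import Mathlib

section
/- Let R be an Hermite ring. Then every k×m matrix F over R that is right invertible (i.e., FG = I_k for some m×k matrix G over R) can be complemented: there exists an invertible m×m matrix F_0 over R whose first k rows form F. Dually, every m×k left invertible matrix over R can be complemented to an invertible m×m matrix over R whose first k columns form it. -/
/-- A commutative unital ring `R` is an **Hermite ring** if every unimodular
row `(a_0, …, a_m)` (i.e. `∑ i, a i * b i = 1` for some `b`) can be
complemented to an invertible square matrix over `R` whose first row it is. -/
def IsHermiteRing (R : Type*) [CommRing R] : Prop :=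
  ∀ (m : ℕ) (a b : Fin (m + 1) → R), (∑ i, a i * b i) = 1 →
    ∃ M : Matrix (Fin (m + 1)) (Fin (m + 1)) R, IsUnit M ∧ ∀ j, M 0 j = a j

theorem hermite_rows_aux (R : Type*) [CommRing R] (hR : IsHermiteRing R) (k : ℕ) :
    ∀ (m : ℕ) (hkm : k ≤ m) (F : Matrix (Fin k) (Fin m) R)
        (G : Matrix (Fin m) (Fin k) R), F * G = 1 →
      ∃ F₀ : Matrix (Fin m) (Fin m) R, IsUnit F₀ ∧
        ∀ (i : Fin k) (j : Fin m), F₀ (Fin.castLE hkm i) j = F i j := by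
  induction k with
  | zero =>
    intro m hkm F G _
    exact ⟨1, isUnit_one, fun i => i.elim0⟩
  | succ k ih =>
    intro m hkm F G hFG
    obtain ⟨n, rfl⟩ : ∃ n, m = n + 1 := ⟨m - 1, by omega⟩
    have hkn : k ≤ n := by omega
    obtain ⟨M, hM, hMa⟩ := hR n (F 0) (fun j => G j 0) (by
      have := congrFun (congrFun hFG 0) 0
      simpa [Matrix.mul_apply] using this)
    obtain ⟨N, hMN⟩ := hM.exists_right_inv
    have hNM : N * M = 1 := mul_eq_one_comm.mp hMN
    have hKM : (F * N) * M = F := by rw [Matrix.mul_assoc, hNM, Matrix.mul_one]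
    have hKL : (F * N) * (M * G) = 1 := by rw [← Matrix.mul_assoc, hKM, hFG]
    have hK0 : ∀ j, (F * N) 0 j = (1 : Matrix (Fin (n+1)) (Fin (n+1)) R) 0 j := by
      intro j
      rw [← hMN, Matrix.mul_apply, Matrix.mul_apply]
      exact Finset.sum_congr rfl fun x _ => by rw [hMa]
    generalize F * N = K at *
    generalize M * G = L at *
    have hL0 : ∀ j : Fin k, L 0 j.succ = 0 := by
      intro j
      have h := congrFun (congrFun hKL 0) j.succ
      rw [Matrix.mul_apply] at h
      simp only [hK0] at h
      rw [← Matrix.mul_apply, Matrix.one_mul, Matrix.one_apply_ne (Fin.succ_ne_zero j).symm] at h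
      exact h
    obtain ⟨P, hP, hPF⟩ := ih n hkn (K.submatrix Fin.succ Fin.succ)
      (L.submatrix Fin.succ Fin.succ) (by
        ext i j
        have h := congrFun (congrFun hKL i.succ) j.succ
        rw [Matrix.mul_apply, Fin.sum_univ_succ, hL0, mul_zero, zero_add] at h
        rw [Matrix.mul_apply]
        simpa [Matrix.one_apply] using h)
    let H : Matrix (Fin (n+1)) (Fin (n+1)) R := Matrix.of (Fin.cons (Fin.cons 1 0)
      (fun i => Fin.cons (if h : i.val < k then K (Fin.succ ⟨i, h⟩) 0 else 0) (P i)))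
    have hH : IsUnit H := by
      rw [Matrix.isUnit_iff_isUnit_det] at hP ⊢
      have : H.det = P.det := by
        rw [Matrix.det_succ_row_zero, Fin.sum_univ_succ]
        have : H.submatrix Fin.succ Fin.succ = P := by
          ext i j
          simp [H]
        simp [this]
        simp [H]
      rwa [this]
    refine ⟨H * M, hH.mul hM, fun i j => ?_⟩
    have hrow : ∀ x, H (Fin.castLE hkm i) x = K i x := by
      intro x
      refine Fin.cases ?_ (fun i => ?_) i
      · rw [hK0]
        refine Fin.cases ?_ (fun x => ?_) x
        · simp [H]
        · simp [H, Matrix.one_apply, (Fin.succ_ne_zero x).symm]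
      · have e : Fin.castLE hkm i.succ = (Fin.castLE hkn i).succ := rfl
        rw [e]
        refine Fin.cases ?_ (fun x => ?_) x
        · simp [H]
          rfl
        · simpa [H] using hPF i x
    rw [← hKM, Matrix.mul_apply, Matrix.mul_apply]
    exact Finset.sum_congr rfl fun x _ => by rw [hrow]

/-- **Lemma 2.1.**  If `R` is an Hermite ring, then every right invertible
`k × m` matrix over `R` can be complemented to an invertible `m × m` matrix
over `R` whose first `k` rows form it; dually, every left invertible `m × k`
matrix can be complemented to an invertible `m × m` matrix whose first `k`
columns form it. -/
theorem hermite_complement_matrix (R : Type*) [CommRing R]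
    (hR : IsHermiteRing R) :
    (∀ (k m : ℕ) (hkm : k ≤ m) (F : Matrix (Fin k) (Fin m) R)
        (G : Matrix (Fin m) (Fin k) R), F * G = 1 →
      ∃ F₀ : Matrix (Fin m) (Fin m) R, IsUnit F₀ ∧
        ∀ (i : Fin k) (j : Fin m), F₀ (Fin.castLE hkm i) j = F i j) ∧
    (∀ (k m : ℕ) (hkm : k ≤ m) (F : Matrix (Fin m) (Fin k) R)
        (G : Matrix (Fin k) (Fin m) R), G * F = 1 →
      ∃ F₀ : Matrix (Fin m) (Fin m) R, IsUnit F₀ ∧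
        ∀ (i : Fin m) (j : Fin k), F₀ i (Fin.castLE hkm j) = F i j) := by
  refine ⟨fun k => hermite_rows_aux R hR k, fun k m hkm F G h => ?_⟩
  obtain ⟨P, hP, hPF⟩ := hermite_rows_aux R hR k m hkm F.transpose G.transpose (by
    rw [← Matrix.transpose_mul, h, Matrix.transpose_one])
  refine ⟨P.transpose, ?_, fun i j => hPF j i⟩
  rw [Matrix.isUnit_iff_isUnit_det] at hP ⊢
  rwa [Matrix.det_transpose]
end

section
/- Let R be an Hermite ring without divisors of zero, with field of fractions F. If G is a (rectangular) matrix with entries in F that admits a left coprime factorization over R, then G also admits a right coprime factorization over R; and conversely, if G admits a right coprime factorization over R then it admits a left coprime factorization over R. -/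
/-- `G = Q⁻¹ P` is a left coprime factorization of the matrix `G` over the
field of fractions of `R`: `P, Q` are matrices over `R`, `Q` is square with
nonzero determinant, and `P, Q` are left coprime (`P Y₁ + Q Y₂ = 1`). -/
def HasLeftCoprimeFactorization (R : Type*) [CommRing R] [IsDomain R] {m n : ℕ}
    (G : Matrix (Fin m) (Fin n) (FractionRing R)) : Prop :=
  ∃ (P : Matrix (Fin m) (Fin n) R) (Q : Matrix (Fin m) (Fin m) R),
    Q.det ≠ 0 ∧
    (∃ (Y₁ : Matrix (Fin n) (Fin m) R) (Y₂ : Matrix (Fin m) (Fin m) R),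
      P * Y₁ + Q * Y₂ = 1) ∧
    (Q.map (algebraMap R (FractionRing R))) * G = P.map (algebraMap R (FractionRing R))

/-- `G = N M⁻¹` is a right coprime factorization of the matrix `G` over the
field of fractions of `R`: `N, M` are matrices over `R`, `M` is square with
nonzero determinant, and `N, M` are right coprime (`X₁ N + X₂ M = 1`). -/
def HasRightCoprimeFactorization (R : Type*) [CommRing R] [IsDomain R] {m n : ℕ}
    (G : Matrix (Fin m) (Fin n) (FractionRing R)) : Prop :=
  ∃ (N : Matrix (Fin m) (Fin n) R) (M : Matrix (Fin n) (Fin n) R),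
    M.det ≠ 0 ∧
    (∃ (X₁ : Matrix (Fin n) (Fin m) R) (X₂ : Matrix (Fin n) (Fin n) R),
      X₁ * N + X₂ * M = 1) ∧
    G * (M.map (algebraMap R (FractionRing R))) = N.map (algebraMap R (FractionRing R))

theorem hermite_cancel_one {R : Type*} [CommRing R] (hR : IsHermiteRing R) (n : ℕ)
    {K : Type*} [AddCommGroup K] [Module R K] (e : (R × K) ≃ₗ[R] (Fin (n + 1) → R)) :
    Nonempty (K ≃ₗ[R] (Fin n → R)) := by
  have key : ∀ v : Fin (n + 1) → R, (e.symm v).1 = ∑ j, (e.symm (Pi.single j 1)).1 * v j := by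
    intro v
    have h := LinearMap.pi_apply_eq_sum_univ ((LinearMap.fst R R K).comp e.symm.toLinearMap) v
    simp only [LinearMap.comp_apply, LinearEquiv.coe_coe, LinearMap.fst_apply, smul_eq_mul] at h
    rw [h]
    refine Finset.sum_congr rfl fun j _ => ?_
    rw [mul_comm]
    congr 3
    congr 1
    ext i
    simp [Pi.single_apply, eq_comm]
  obtain ⟨M, hM, hM0⟩ := hR n (fun j => (e.symm (Pi.single j 1)).1) (e (1, 0)) (by
    rw [← key]; simp)
  obtain ⟨M', h1, h2⟩ := isUnit_iff_exists.mp hM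
  have hf0 : ∀ x : R × K, (M.mulVec (e x)) 0 = x.1 := by
    intro x
    have := key (e x)
    rw [LinearEquiv.symm_apply_apply] at this
    rw [this]
    simp [Matrix.mulVec, dotProduct, hM0]
  have hf0' : ∀ v : Fin (n + 1) → R, (e.symm (M'.mulVec v)).1 = v 0 := by
    intro v
    have := hf0 (e.symm (M'.mulVec v))
    rw [LinearEquiv.apply_symm_apply, Matrix.mulVec_mulVec, h1, Matrix.one_mulVec] at this
    exact this.symm
  let φ : K →ₗ[R] (Fin n → R) :=
    (LinearMap.funLeft R R Fin.succ).comp ((Matrix.mulVecLin M).comp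
      (e.toLinearMap.comp (LinearMap.inr R R K)))
  refine ⟨LinearEquiv.ofBijective φ ⟨?_, ?_⟩⟩
  · rw [injective_iff_map_eq_zero]
    intro k hk
    have hz : M.mulVec (e (0, k)) = 0 := by
      ext i
      refine Fin.cases ?_ (fun j => ?_) i
      · simpa using hf0 (0, k)
      · exact congrFun hk j
    have : e (0, k) = 0 := by
      rw [← Matrix.one_mulVec (e (0, k)), ← h2, ← Matrix.mulVec_mulVec, hz, Matrix.mulVec_zero]
    have := e.map_eq_zero_iff.mp this
    exact congrArg Prod.snd this
  · intro w
    refine ⟨(e.symm (M'.mulVec (Fin.cons 0 w))).2, ?_⟩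
    have h0 := hf0' (Fin.cons 0 w)
    have h3 : ((0 : R), (e.symm (M'.mulVec (Fin.cons 0 w))).2)
        = e.symm (M'.mulVec (Fin.cons 0 w)) := by
      ext
      · rw [h0]; rfl
      · rfl
    ext j
    change (M.mulVec (e (0, (e.symm (M'.mulVec (Fin.cons 0 w))).2))) j.succ = w j
    rw [h3, LinearEquiv.apply_symm_apply, Matrix.mulVec_mulVec, h1, Matrix.one_mulVec]
    rfl

theorem hermite_cancel {R : Type*} [CommRing R] (hR : IsHermiteRing R) (n : ℕ)
    {K : Type*} [AddCommGroup K] [Module R K] (m : ℕ)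
    (e : ((Fin m → R) × K) ≃ₗ[R] (Fin (n + m) → R)) :
    Nonempty (K ≃ₗ[R] (Fin n → R)) := by
  induction m with
  | zero => exact ⟨(LinearEquiv.uniqueProd (R := R) (M := K) (M₂ := Fin 0 → R)).symm.trans e⟩
  | succ m ih =>
    have c : (R × ((Fin m → R) × K)) ≃ₗ[R] ((Fin (m + 1) → R) × K) :=
      (LinearEquiv.prodAssoc R R (Fin m → R) K).symm.trans
        ((Fin.consLinearEquiv R (fun _ => R)).prodCongr (LinearEquiv.refl R K))
    obtain ⟨e'⟩ := hermite_cancel_one hR (n + m) (c.trans e)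
    exact ih e'

theorem left_to_right (R : Type*) [CommRing R]
    [IsDomain R] (hR : IsHermiteRing R) (m n : ℕ)
    (G : Matrix (Fin m) (Fin n) (FractionRing R))
    (h : HasLeftCoprimeFactorization R G) : HasRightCoprimeFactorization R G := by
  obtain ⟨P, Q, hQ, ⟨Y₁, Y₂, hY⟩, hG⟩ := h
  let T : ((Fin m → R) × (Fin n → R)) →ₗ[R] (Fin m → R) :=
    Q.mulVecLin.coprod (-P.mulVecLin)
  let s : (Fin m → R) →ₗ[R] ((Fin m → R) × (Fin n → R)) :=
    Y₂.mulVecLin.prod (-Y₁.mulVecLin)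
  have hT : ∀ x, T x = Q.mulVec x.1 - P.mulVec x.2 := fun x => by simp [T, sub_eq_add_neg]
  have hTs : ∀ y, T (s y) = y := by
    intro y
    rw [hT]
    simp only [s, LinearMap.prod_apply, Function.prod_apply, LinearMap.neg_apply, Matrix.mulVecLin_apply,
      Matrix.mulVec_neg, sub_neg_eq_add, Matrix.mulVec_mulVec]
    rw [← Matrix.add_mulVec, add_comm, hY, Matrix.one_mulVec]
  let π : ((Fin m → R) × (Fin n → R)) →ₗ[R] LinearMap.ker T :=
    (LinearMap.id - s.comp T).codRestrict _ (fun x => by simp [hTs])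
  have hπ : ∀ x, ((π x : LinearMap.ker T) : (Fin m → R) × (Fin n → R)) = x - s (T x) :=
    fun x => rfl
  have hπk : ∀ k : LinearMap.ker T, π k = k := by
    intro k
    ext1
    rw [hπ, LinearMap.mem_ker.mp k.2]; simp
  let e : ((Fin m → R) × (Fin n → R)) ≃ₗ[R] ((Fin m → R) × LinearMap.ker T) :=
    LinearEquiv.ofLinearMap (T.prod π) (s.coprod (LinearMap.ker T).subtype)
      (by
        apply LinearMap.ext
        rintro ⟨y, k⟩
        have hk : T k = 0 := k.2
        refine Prod.ext ?_ (Subtype.ext ?_)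
        · simp [hTs, hk]
        · simp [hπ, hTs, hk])
      (by
        apply LinearMap.ext
        intro x
        simp [hπ])
  let c : ((Fin m → R) × (Fin n → R)) ≃ₗ[R] (Fin (n + m) → R) :=
    (LinearEquiv.sumArrowLequivProdArrow (Fin m) (Fin n) R R).symm.trans
      (LinearEquiv.funCongrLeft R R ((finCongr (Nat.add_comm n m)).trans finSumFinEquiv.symm))
  obtain ⟨g⟩ := hermite_cancel hR n m (e.symm.trans c)
  let N : Matrix (Fin m) (Fin n) R := LinearMap.toMatrix'
    ((LinearMap.fst R _ _).comp ((LinearMap.ker T).subtype.comp g.symm.toLinearMap))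
  let M : Matrix (Fin n) (Fin n) R := LinearMap.toMatrix'
    ((LinearMap.snd R _ _).comp ((LinearMap.ker T).subtype.comp g.symm.toLinearMap))
  let X₁ : Matrix (Fin n) (Fin m) R := LinearMap.toMatrix'
    (g.toLinearMap.comp (π.comp (LinearMap.inl R _ _)))
  let X₂ : Matrix (Fin n) (Fin n) R := LinearMap.toMatrix'
    (g.toLinearMap.comp (π.comp (LinearMap.inr R _ _)))
  have hN : ∀ w, N.mulVec w = (g.symm w : (Fin m → R) × (Fin n → R)).1 := by
    intro w; simp [N, LinearMap.toMatrix'_mulVec]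
  have hM : ∀ w, M.mulVec w = (g.symm w : (Fin m → R) × (Fin n → R)).2 := by
    intro w; simp [M, LinearMap.toMatrix'_mulVec]
  have hX₁ : ∀ w, X₁.mulVec w = g (π (w, 0)) := by
    intro w; simp [X₁, LinearMap.toMatrix'_mulVec]
  have hX₂ : ∀ w, X₂.mulVec w = g (π (0, w)) := by
    intro w; simp [X₂, LinearMap.toMatrix'_mulVec]
  have hker : ∀ w, Q.mulVec (N.mulVec w) = P.mulVec (M.mulVec w) := by
    intro w
    rw [hN, hM, ← sub_eq_zero, ← hT]
    exact (g.symm w).2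
  have hQN : Q * N = P * M := by
    apply Matrix.ext_of_mulVec_single
    intro i
    rw [← Matrix.mulVec_mulVec, ← Matrix.mulVec_mulVec, hker]
  refine ⟨N, M, ?_, ⟨X₁, X₂, ?_⟩, ?_⟩
  · intro hdet
    obtain ⟨w, hw, hMw⟩ := Matrix.exists_mulVec_eq_zero_iff.mpr hdet
    have h1 := hker w
    rw [hMw, Matrix.mulVec_zero] at h1
    have h2 := Matrix.eq_zero_of_mulVec_eq_zero hQ h1
    rw [hN] at h2
    rw [hM] at hMw
    apply hw
    have : g.symm w = 0 := Subtype.ext (Prod.ext h2 hMw)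
    exact g.symm.map_eq_zero_iff.mp this
  · apply Matrix.ext_of_mulVec_single
    intro i
    rw [Matrix.add_mulVec, ← Matrix.mulVec_mulVec, ← Matrix.mulVec_mulVec, hX₁, hX₂, hN, hM,
      ← map_add, ← map_add, Prod.mk_add_mk, add_zero, zero_add, Prod.mk.eta, hπk,
      LinearEquiv.apply_symm_apply, Matrix.one_mulVec]
  · have hu : IsUnit (Q.map (algebraMap R (FractionRing R))).det := by
      rw [isUnit_iff_ne_zero]
      have := (algebraMap R (FractionRing R)).map_det Q
      rw [RingHom.mapMatrix_apply] at this
      rw [← this]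
      exact (map_ne_zero_iff _ (IsFractionRing.injective R (FractionRing R))).mpr hQ
    have h1 : Q.map (algebraMap R (FractionRing R)) * (G * M.map (algebraMap R (FractionRing R)))
        = Q.map (algebraMap R (FractionRing R)) * N.map (algebraMap R (FractionRing R)) := by
      rw [← Matrix.mul_assoc, hG, ← Matrix.map_mul, ← Matrix.map_mul, hQN]
    have h2 := congrArg (fun Z => (Q.map (algebraMap R (FractionRing R)))⁻¹ * Z) h1
    simpa [Matrix.nonsing_inv_mul_cancel_left _ _ hu] using h2

theorem left_transpose (R : Type*) [CommRing R] [IsDomain R] (m n : ℕ)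
    (G : Matrix (Fin m) (Fin n) (FractionRing R))
    (h : HasRightCoprimeFactorization R G) : HasLeftCoprimeFactorization R G.transpose := by
  obtain ⟨N, M, hM, ⟨X₁, X₂, hX⟩, hG⟩ := h
  refine ⟨N.transpose, M.transpose, by rwa [Matrix.det_transpose],
    ⟨X₁.transpose, X₂.transpose, ?_⟩, ?_⟩
  · rw [← Matrix.transpose_mul, ← Matrix.transpose_mul, ← Matrix.transpose_add, hX,
      Matrix.transpose_one]
  · rw [Matrix.transpose_map, Matrix.transpose_map, ← Matrix.transpose_mul, hG]

theorem right_transpose (R : Type*) [CommRing R] [IsDomain R] (m n : ℕ)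
    (G : Matrix (Fin m) (Fin n) (FractionRing R))
    (h : HasRightCoprimeFactorization R G.transpose) : HasLeftCoprimeFactorization R G := by
  have := left_transpose R n m G.transpose h
  rwa [Matrix.transpose_transpose] at this

theorem left_to_right_transpose (R : Type*) [CommRing R] [IsDomain R] (hR : IsHermiteRing R)
    (m n : ℕ) (G : Matrix (Fin m) (Fin n) (FractionRing R))
    (h : HasRightCoprimeFactorization R G) : HasLeftCoprimeFactorization R G :=
  right_transpose R m n G (left_to_right R hR n m G.transpose (left_transpose R m n G h))

/-- **Proposition 2.2** (together with its converse).  Over an Hermite ring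
without zero divisors, a matrix over the field of fractions admits a left
coprime factorization if and only if it admits a right coprime
factorization. -/
theorem hermite_left_coprime_iff_right_coprime (R : Type*) [CommRing R]
    [IsDomain R] (hR : IsHermiteRing R) (m n : ℕ)
    (G : Matrix (Fin m) (Fin n) (FractionRing R)) :
    HasLeftCoprimeFactorization R G ↔ HasRightCoprimeFactorization R G := by
  exact ⟨left_to_right R hR m n G, left_to_right_transpose R hR m n G⟩
end
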